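/- Let n and d be positive integers with gcd(n,d) = 1, let r be an integer, and let a, b, c be indeterminates. Then the sum over k from 0 to n−1 of [2dk+r] · (aq^r, q^r/a, bq^r, q^r/b, q^r/c, q^r; q^d)_k / (aq^d, q^d/a, bq^d, q^d/b, cq^d, q^d; q^d)_k · (c·q^{2d−3r})^k is congruent to 0 modulo [n] = (1−q^n)/(1−q). -/

import Mathlib

open Finset

noncomputable section

/-- Polynomial ring in the variables `q, a, b, c` (indices `0,1,2,3`). -/
abbrev R : Type := MvPolynomial (Fin 4) ℚ

/-- Field of rational functions in `q, a, b, c`. -/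
abbrev K : Type := FractionRing R

def qv : K := algebraMap R K (MvPolynomial.X 0)
def av : K := algebraMap R K (MvPolynomial.X 1)
def bv : K := algebraMap R K (MvPolynomial.X 2)
def cv : K := algebraMap R K (MvPolynomial.X 3)

/-- The q-shifted factorial `(x; Q)_k = (1-x)(1-xQ)⋯(1-xQ^{k-1})`. -/
def poch (x Q : K) (k : ℕ) : K := ∏ i ∈ Finset.range k, (1 - x * Q ^ i)

/-- The q-integer `[m] = (1-q^m)/(1-q)` (allowing integer `m`). -/
def qint (m : ℤ) : K := (1 - qv ^ m) / (1 - qv)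

/-- The n-th cyclotomic polynomial, as a polynomial in the variable `q`. -/
def Phi (n : ℕ) : R :=
  Polynomial.eval₂ MvPolynomial.C (MvPolynomial.X 0) (Polynomial.cyclotomic n ℚ)

/-- `[n] = 1 + q + ⋯ + q^{n-1}` as a polynomial in `q`. -/
def qintR (n : ℕ) : R := ∑ i ∈ Finset.range n, (MvPolynomial.X 0 : R) ^ i

/-- `x ≡ 0 (mod M)` as rational functions: `x = M·f/g` where `g` shares no prime
factor with `M` (i.e. the numerator of `x` in lowest terms is divisible by `M`). -/
def modCong (M : R) (x : K) : Prop :=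
  ∃ f g : R, g ≠ 0 ∧ (∀ p : R, Prime p → p ∣ M → ¬ p ∣ g) ∧
    x * algebraMap R K g = algebraMap R K (M * f)

/-!
Since `[n]` is squarefree, it suffices that the sum is integral and vanishes in the residue field of
every prime factor `p` of `[n]`. There `q` becomes a primitive `N`-th root of unity `ζ`, `N ∣ n`,
while `a, b, c`, which do not occur in `p`, stay generic. The ratios of consecutive terms then have
period `N`, so the sum splits into blocks of `N` terms, each a multiple of the first. As `d` is
invertible modulo `N`, some `0 ≤ m < N` satisfies `ζ ^ (r + d * m) = 1`: the first block stops at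
index `m`, and since the series is well-poised, its terms of index `j` and `m - j` cancel.
-/

section WellPoised

variable {F : Type*} [Field F] {w Q : F} {m : ℕ}

lemma prod_range_reflect_mul_prod_range_sub {M : Type*} [CommMonoid M] (W : ℕ → M) {k m : ℕ}
    (hk : k ≤ m) :
    (∏ i ∈ range k, W (m - 1 - i)) * ∏ i ∈ range (m - k), W i = ∏ i ∈ range m, W i := by
  obtain ⟨l, rfl⟩ := Nat.exists_eq_add_of_le' hk
  rw [Nat.add_sub_cancel, prod_range_add, mul_comm, ← prod_range_reflect (fun i ↦ W (l + i))]
  congr 1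
  refine prod_congr rfl fun i hi ↦ congrArg W ?_
  have := mem_range.1 hi
  omega

-- Up to the factor `Q⁻¹ ^ k`, the product of the first `k` ratios is the binomial-like quotient
-- `B k`, which is invariant under `k ↦ m - k`; the factor `1 - w * Q ^ (2 * j)` is then what makes
-- the summand antisymmetric.
theorem sum_one_sub_mul_prod_eq_zero_of_reflect (hQ : Q ≠ 0) (hw : w * Q ^ m = 1) {ρ W : ℕ → F}
    (hW : ∀ i < m, W i ≠ 0) (hρ : ∀ i < m, ρ i = Q⁻¹ * (W (m - 1 - i) / W i)) :
    ∑ j ∈ range (m + 1), (1 - w * Q ^ (2 * j)) * ∏ i ∈ range j, ρ i = 0 := by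
  let V : ℕ → F := fun k ↦ ∏ i ∈ range k, W i
  let B : ℕ → F := fun k ↦ V m / (V k * V (m - k))
  have V_ne_zero : ∀ k ≤ m, V k ≠ 0 := fun k hk ↦
    prod_ne_zero_iff.2 fun i hi ↦ hW i ((mem_range.1 hi).trans_le hk)
  have B_symm : ∀ k ≤ m, B (m - k) = B k := fun k hk ↦ by
    simp only [B, Nat.sub_sub_self hk, mul_comm]
  have prod_eq : ∀ k ≤ m, ∏ i ∈ range k, ρ i = (Q ^ k)⁻¹ * B k := fun k hk ↦ by
    have hV := V_ne_zero (m - k) (Nat.sub_le m k)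
    rw [prod_congr rfl fun i hi ↦ hρ i ((mem_range.1 hi).trans_le hk), prod_mul_distrib,
      prod_const, card_range, inv_pow, prod_div_distrib,
      eq_div_of_mul_eq hV (prod_range_reflect_mul_prod_range_sub W hk), div_div,
      mul_comm (V (m - k))]
  have term_eq : ∀ j ∈ range (m + 1), (1 - w * Q ^ (2 * j)) * ∏ i ∈ range j, ρ i =
      (Q ^ j)⁻¹ * B j - (Q ^ (m - j))⁻¹ * B (m - j) := fun j hj ↦ by
    have hj : j ≤ m := mem_range_succ_iff.1 hj
    have hw' : (Q ^ (m - j))⁻¹ = w * Q ^ j := by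
      refine inv_eq_of_mul_eq_one_left ?_
      rw [mul_assoc, ← pow_add, Nat.add_sub_cancel' hj, hw]
    rw [prod_eq j hj, B_symm j hj, hw', two_mul, pow_add]
    field_simp
  rw [sum_congr rfl term_eq, sum_sub_distrib,
    ← sum_range_reflect (fun j ↦ (Q ^ j)⁻¹ * B j) (m + 1), Nat.add_sub_cancel, sub_self]

/-- The factor `(1 - x w Q ^ i) / (1 - x⁻¹ Q ^ (i + 1))` that the parameter `x` contributes to the
ratio of two consecutive terms of a well-poised basic hypergeometric series with base `Q`: the
numerator parameter `x w` is paired with the denominator parameter `Q / x`, so that their product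
`w Q` does not depend on `x`. -/
def wellPoisedFactor (w Q x : F) (i : ℕ) : F :=
  (1 - x * w * Q ^ i) / (1 - x⁻¹ * Q ^ (i + 1))

/-- The denominator of the product of `wellPoisedFactor` over the parameters `1` and `x s`. -/
def wellPoisedDenom {ι : Type*} [Fintype ι] (Q : F) (x : ι → F) (i : ℕ) : F :=
  (1 - Q ^ (i + 1)) * ∏ s, (1 - (x s)⁻¹ * Q ^ (i + 1))

/-- The ratio of the terms of index `i + 1` and `i` in the well-poised series with base `Q`,
argument `z` and parameters `1` and `x s`. The very-well-poised factor `1 - w Q ^ (2 * i)` is not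
included. -/
def wellPoisedRatio {ι : Type*} [Fintype ι] (w Q z : F) (x : ι → F) (i : ℕ) : F :=
  z * (wellPoisedFactor w Q 1 i * ∏ s, wellPoisedFactor w Q (x s) i)

lemma wellPoisedFactor_eq_reflect {x : F} (hx : x ≠ 0) (hw : w * Q ^ m = 1) {i : ℕ} (hi : i < m) :
    wellPoisedFactor w Q x i =
      -(x * (w * Q ^ i)) * ((1 - x⁻¹ * Q ^ (m - 1 - i + 1)) / (1 - x⁻¹ * Q ^ (i + 1))) := by
  have hwQ : w * Q ^ i * Q ^ (m - 1 - i + 1) = 1 := by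
    rw [mul_assoc, ← pow_add, show i + (m - 1 - i + 1) = m by omega, hw]
  rw [wellPoisedFactor, mul_div_assoc']
  congr 1
  linear_combination -(x * x⁻¹) * hwQ - mul_inv_cancel₀ hx

variable {ι : Type*} [Fintype ι] {c : ℕ} {x : ι → F} {z : F}

lemma wellPoisedRatio_eq_reflect (hQ : Q ≠ 0) (hw : w * Q ^ m = 1) (hx : ∀ s, x s ≠ 0)
    (hcard : Fintype.card ι = 2 * c + 1) (hz : z * (w ^ (c + 1) * ∏ s, x s) = Q ^ c)
    {i : ℕ} (hi : i < m) :
    wellPoisedRatio w Q z x i =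
      Q⁻¹ * (wellPoisedDenom Q x (m - 1 - i) / (Q ^ (m - 1 - i)) ^ (c + 1) /
        (wellPoisedDenom Q x i / (Q ^ i) ^ (c + 1))) := by
  set D := wellPoisedDenom Q x with D_def
  set u := Q ^ i
  set v := Q ^ (m - 1 - i)
  have hu : u ≠ 0 := pow_ne_zero _ hQ
  have hv : v ≠ 0 := pow_ne_zero _ hQ
  have hwu : w * u = (Q * v)⁻¹ := by
    refine eq_inv_of_mul_eq_one_left ?_
    rw [mul_assoc, ← pow_succ', ← pow_add, show i + (m - 1 - i + 1) = m by omega, hw]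
  calc wellPoisedRatio w Q z x i
      = z * (w * u * (w * u) ^ (2 * c + 1) * ∏ s, x s) * (D (m - 1 - i) / D i) := by
        rw [wellPoisedRatio, wellPoisedFactor_eq_reflect one_ne_zero hw hi,
          prod_congr rfl fun s _ ↦ wellPoisedFactor_eq_reflect (hx s) hw hi, prod_mul_distrib,
          prod_neg, prod_mul_distrib, prod_div_distrib, prod_const, card_univ, hcard,
          (odd_two_mul_add_one c).neg_one_pow, D_def, wellPoisedDenom, wellPoisedDenom,
          mul_div_mul_comm, inv_one, one_mul, one_mul, one_mul]
        ring
    _ = z * (w ^ (c + 1) * ∏ s, x s) * (u ^ (c + 1) * (w * u) ^ (c + 1)) *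
          (D (m - 1 - i) / D i) := by ring
    _ = Q⁻¹ * (D (m - 1 - i) / v ^ (c + 1) / (D i / u ^ (c + 1))) := by
        rw [hz, hwu, inv_pow, mul_pow, pow_succ Q]
        field_simp

theorem sum_wellPoised_eq_zero (hQ : Q ≠ 0) (hw : w * Q ^ m = 1) (hx : ∀ s, x s ≠ 0)
    (hcard : Fintype.card ι = 2 * c + 1) (hz : z * (w ^ (c + 1) * ∏ s, x s) = Q ^ c)
    (hQ_ne : ∀ i < m, Q ^ (i + 1) ≠ 1) (hx_ne : ∀ s, ∀ i < m, (x s)⁻¹ * Q ^ (i + 1) ≠ 1)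
    {N : ℕ} (hmN : m < N) :
    ∑ j ∈ range N, (1 - w * Q ^ (2 * j)) * ∏ i ∈ range j, wellPoisedRatio w Q z x i = 0 := by
  have ratio_zero : wellPoisedRatio w Q z x m = 0 := by
    simp [wellPoisedRatio, wellPoisedFactor, hw]
  have denom_ne_zero : ∀ i < m, wellPoisedDenom Q x i ≠ 0 := fun i hi ↦
    mul_ne_zero (sub_ne_zero.2 (hQ_ne i hi).symm)
      (prod_ne_zero_iff.2 fun s _ ↦ sub_ne_zero.2 (hx_ne s i hi).symm)
  rw [← sum_subset (range_subset_range.2 (Nat.succ_le_of_lt hmN))]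
  · exact sum_one_sub_mul_prod_eq_zero_of_reflect
      (W := fun i ↦ wellPoisedDenom Q x i / (Q ^ i) ^ (c + 1)) hQ hw
      (fun i hi ↦ div_ne_zero (denom_ne_zero i hi) (pow_ne_zero _ (pow_ne_zero _ hQ)))
      (fun i hi ↦ wellPoisedRatio_eq_reflect hQ hw hx hcard hz hi)
  · intro j _ hj
    have hmj : m < j := not_le.1 fun h ↦ hj (mem_range_succ_iff.2 h)
    rw [prod_eq_zero (mem_range.2 hmj) ratio_zero, mul_zero]

end WellPoised

section Reduction

variable {A L F : Type*} [CommRing A] [Field L] [Algebra A L] [Field F] {ψ : A →+* F}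

/-- `x` can be written as a fraction `f / g` of elements of `A` with `ψ g ≠ 0`, and `y` is
`ψ f / ψ g`. When `ψ` is the map from `A` to its residue field at a prime, this says that `x` is
integral at that prime and has residue `y`. -/
def ReducesTo (ψ : A →+* F) (x : L) (y : F) : Prop :=
  ∃ f g : A, ψ g ≠ 0 ∧ x * algebraMap A L g = algebraMap A L f ∧ y * ψ g = ψ f

/-- The relation `ReducesTo ψ` as a subring of `L × F`. -/
def reductionGraph (ψ : A →+* F) : Subring (L × F) where
  carrier := {v | ReducesTo ψ v.1 v.2}
  zero_mem' := ⟨0, 1, by simp, by simp, by simp⟩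
  one_mem' := ⟨1, 1, by simp, by simp, by simp⟩
  neg_mem' := by
    rintro _ ⟨f, g, hg, hx, hy⟩
    exact ⟨-f, g, hg, by simp [hx], by simp [hy]⟩
  add_mem' := by
    rintro _ _ ⟨f, g, hg, hx, hy⟩ ⟨f', g', hg', hx', hy'⟩
    refine ⟨f * g' + f' * g, g * g', by simp [hg, hg'], ?_, ?_⟩
    · simp only [map_add, map_mul, ← hx, ← hx', Prod.fst_add]; ring
    · simp only [map_add, map_mul, ← hy, ← hy', Prod.snd_add]; ring
  mul_mem' := by
    rintro _ _ ⟨f, g, hg, hx, hy⟩ ⟨f', g', hg', hx', hy'⟩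
    refine ⟨f * f', g * g', by simp [hg, hg'], ?_, ?_⟩
    · simp only [map_mul, ← hx, ← hx', Prod.fst_mul]; ring
    · simp only [map_mul, ← hy, ← hy', Prod.snd_mul]; ring

variable {x x' : L} {y y' : F}

lemma mem_reductionGraph : (x, y) ∈ reductionGraph ψ ↔ ReducesTo ψ x y := Iff.rfl

namespace ReducesTo

lemma algebraMap (f : A) : ReducesTo ψ (algebraMap A L f) (ψ f) := ⟨f, 1, by simp, by simp, by simp⟩

lemma zero : ReducesTo ψ (0 : L) 0 := (reductionGraph ψ).zero_mem

lemma one : ReducesTo ψ (1 : L) 1 := (reductionGraph ψ).one_mem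

lemma add (h : ReducesTo ψ x y) (h' : ReducesTo ψ x' y') : ReducesTo ψ (x + x') (y + y') :=
  mem_reductionGraph.1 (add_mem (mem_reductionGraph.2 h) (mem_reductionGraph.2 h') :)

lemma sub (h : ReducesTo ψ x y) (h' : ReducesTo ψ x' y') : ReducesTo ψ (x - x') (y - y') :=
  mem_reductionGraph.1 (sub_mem (mem_reductionGraph.2 h) (mem_reductionGraph.2 h') :)

lemma mul (h : ReducesTo ψ x y) (h' : ReducesTo ψ x' y') : ReducesTo ψ (x * x') (y * y') :=
  mem_reductionGraph.1 (mul_mem (mem_reductionGraph.2 h) (mem_reductionGraph.2 h') :)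

lemma pow (h : ReducesTo ψ x y) (k : ℕ) : ReducesTo ψ (x ^ k) (y ^ k) :=
  mem_reductionGraph.1 (pow_mem (mem_reductionGraph.2 h) k :)

lemma sum {κ : Type*} {s : Finset κ} {x : κ → L} {y : κ → F}
    (h : ∀ i ∈ s, ReducesTo ψ (x i) (y i)) : ReducesTo ψ (∑ i ∈ s, x i) (∑ i ∈ s, y i) := by
  rw [← mem_reductionGraph, prod_mk_sum]
  exact sum_mem h

lemma prod {κ : Type*} {s : Finset κ} {x : κ → L} {y : κ → F}
    (h : ∀ i ∈ s, ReducesTo ψ (x i) (y i)) : ReducesTo ψ (∏ i ∈ s, x i) (∏ i ∈ s, y i) := by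
  rw [← mem_reductionGraph, prod_mk_prod]
  exact prod_mem h

variable [FaithfulSMul A L]

lemma ne_zero (h : ReducesTo ψ x y) (hy : y ≠ 0) : x ≠ 0 := by
  obtain ⟨f, g, hg, hxg, hyg⟩ := h
  rintro rfl
  have hf : f = 0 := by
    rwa [zero_mul, eq_comm, map_eq_zero_iff _ (FaithfulSMul.algebraMap_injective A L)] at hxg
  rw [hf, map_zero] at hyg
  exact mul_ne_zero hy hg hyg

lemma inv (h : ReducesTo ψ x y) (hy : y ≠ 0) : ReducesTo ψ x⁻¹ y⁻¹ := by
  have hx := h.ne_zero hy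
  obtain ⟨f, g, hg, hxg, hyg⟩ := h
  exact ⟨g, f, hyg ▸ mul_ne_zero hy hg, by rw [← hxg, inv_mul_cancel_left₀ hx],
    by rw [← hyg, inv_mul_cancel_left₀ hy]⟩

lemma div (h : ReducesTo ψ x y) (h' : ReducesTo ψ x' y') (hy' : y' ≠ 0) :
    ReducesTo ψ (x / x') (y / y') := by
  simpa only [div_eq_mul_inv] using h.mul (h'.inv hy')

lemma zpow (h : ReducesTo ψ x y) (hy : y ≠ 0) (k : ℤ) : ReducesTo ψ (x ^ k) (y ^ k) := by
  cases k with
  | ofNat k => simpa using h.pow k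
  | negSucc k => simpa only [zpow_negSucc] using (h.pow (k + 1)).inv (pow_ne_zero _ hy)

lemma one_sub_zpow_div_one_sub (h : ReducesTo ψ x 1) (hx : x ≠ 1) (k : ℤ) :
    ReducesTo ψ ((1 - x ^ k) / (1 - x)) (k : F) := by
  have hx0 := h.ne_zero one_ne_zero
  have hx1 : 1 - x ≠ 0 := sub_ne_zero.2 hx.symm
  induction k with
  | zero => simpa using zero
  | succ k ih =>
    convert ih.add (h.zpow one_ne_zero k) using 1
    · rw [zpow_add_one₀ hx0]
      field_simp
      ring
    · simp
  | pred k ih =>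
    convert ih.sub (h.zpow one_ne_zero (-k - 1)) using 1
    · rw [show x ^ (-k : ℤ) = x ^ (-k - 1 : ℤ) * x by rw [← zpow_add_one₀ hx0, sub_add_cancel]]
      field_simp
      ring
    · simp

lemma one_sub_zpow_div_one_sub_zpow (h : ReducesTo ψ x 1) (hx : x ≠ 1) (j : ℤ) {k : ℤ}
    (hk : (k : F) ≠ 0) : ReducesTo ψ ((1 - x ^ j) / (1 - x ^ k)) (j / k : F) := by
  rw [← div_div_div_cancel_right₀ (sub_ne_zero.2 hx.symm)]
  exact (h.one_sub_zpow_div_one_sub hx j).div (h.one_sub_zpow_div_one_sub hx k) hk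

end ReducesTo

-- The product of the ratios of the preceding blocks is integral, and inside a block the ratios
-- repeat with period `N`, so each block of `N` terms reduces to a multiple of the sum in `hsum`.
theorem ReducesTo.sum_range_mul_prod_zero {N n : ℕ} (hN : N ∣ n) {e ρ : ℕ → L} {ε σ : ℕ → F}
    (he : ∀ l, ∀ j < N, ReducesTo ψ (e (l * N + j)) (ε j))
    (hρ : ∀ l i, i + 1 < N → ReducesTo ψ (ρ (l * N + i)) (σ i))
    (hblock : ∀ l, ∃ y, ReducesTo ψ (∏ i ∈ range N, ρ (l * N + i)) y)
    (hsum : ∑ j ∈ range N, ε j * ∏ i ∈ range j, σ i = 0) :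
    ReducesTo ψ (∑ k ∈ range n, e k * ∏ i ∈ range k, ρ i) 0 := by
  have integral (l : ℕ) : ∃ y, ReducesTo ψ (∏ i ∈ range (l * N), ρ i) y := by
    induction l with
    | zero => exact ⟨1, by simpa using ReducesTo.one⟩
    | succ l ih =>
      obtain ⟨y, hy⟩ := ih
      obtain ⟨y', hy'⟩ := hblock l
      rw [Nat.succ_mul, prod_range_add]
      exact ⟨y * y', hy.mul hy'⟩
  have block_sum (l : ℕ) : ReducesTo ψ
      (∑ j ∈ range N, e (l * N + j) * ∏ i ∈ range (l * N + j), ρ i) 0 := by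
    obtain ⟨y, hy⟩ := integral l
    rw [← mul_zero y, ← hsum, mul_sum]
    refine ReducesTo.sum fun j hj ↦ ?_
    have hj : j < N := mem_range.1 hj
    rw [prod_range_add, mul_left_comm]
    refine hy.mul ((he l j hj).mul (ReducesTo.prod fun i hi ↦ hρ l i ?_))
    have := mem_range.1 hi
    omega
  obtain ⟨l, rfl⟩ := hN
  rw [mul_comm]
  induction l with
  | zero => simpa using ReducesTo.zero
  | succ l ih =>
    rw [Nat.succ_mul, sum_range_add, ← add_zero (0 : F)]
    exact ih.add (block_sum l)

end Reduction

section WellPoisedReduction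

variable {A L F : Type*} [CommRing A] [Field L] [Algebra A L] [FaithfulSMul A L] [Field F]
  {ψ : A →+* F}

lemma ReducesTo.wellPoisedFactor {w Q x : L} {w' Q' x' : F} (hw : ReducesTo ψ w w')
    (hQ : ReducesTo ψ Q Q') (hx : ReducesTo ψ x x') (hx' : x' ≠ 0) {i : ℕ}
    (hne : x'⁻¹ * Q' ^ (i + 1) ≠ 1) :
    ReducesTo ψ (wellPoisedFactor w Q x i) (wellPoisedFactor w' Q' x' i) :=
  (one.sub ((hx.mul hw).mul (hQ.pow i))).div (one.sub ((hx.inv hx').mul (hQ.pow (i + 1))))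
    (sub_ne_zero.2 hne.symm)

lemma ReducesTo.wellPoisedRatio {ι : Type*} [Fintype ι] {w Q z : L} {x : ι → L} {w' Q' z' : F}
    {x' : ι → F} (hw : ReducesTo ψ w w') (hQ : ReducesTo ψ Q Q') (hz : ReducesTo ψ z z')
    (hx : ∀ s, ReducesTo ψ (x s) (x' s)) (hx' : ∀ s, x' s ≠ 0) {i : ℕ} (hQ_ne : Q' ^ (i + 1) ≠ 1)
    (hx_ne : ∀ s, (x' s)⁻¹ * Q' ^ (i + 1) ≠ 1) :
    ReducesTo ψ (wellPoisedRatio w Q z x i) (wellPoisedRatio w' Q' z' x' i) :=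
  hz.mul ((hw.wellPoisedFactor hQ one one_ne_zero (by rwa [inv_one, one_mul])).mul
    (prod fun s _ ↦ hw.wellPoisedFactor hQ (hx s) (hx' s) (hx_ne s)))

lemma wellPoisedRatio_mul_add {ι : Type*} [Fintype ι] {w Q : F} {N : ℕ} (hQ : Q ^ N = 1) (z : F)
    (x : ι → F) (l i : ℕ) : wellPoisedRatio w Q z x (l * N + i) = wellPoisedRatio w Q z x i := by
  simp only [wellPoisedRatio, wellPoisedFactor, add_assoc, pow_add Q (l * N), pow_mul', hQ,
    one_pow, one_mul]

variable {q : L} {ζ : F} {N d : ℕ} {r : ℤ}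

lemma exists_zpow_mul_pow_eq_one (hζ : IsPrimitiveRoot ζ N) (hN : N ≠ 0) (hdN : d.Coprime N)
    (r : ℤ) : ∃ m < N, ζ ^ r * (ζ ^ d) ^ m = 1 := by
  have : NeZero N := ⟨hN⟩
  have hζr : (ζ ^ (-r)) ^ N = 1 := by
    rw [← zpow_natCast, ← zpow_mul, mul_comm, zpow_mul, zpow_natCast, hζ.pow_eq_one, one_zpow]
  obtain ⟨m, hm, h⟩ := (hζ.pow_of_coprime d hdN).eq_pow_of_pow_eq_one hζr
  exact ⟨m, hm, by rw [h, zpow_neg, mul_inv_cancel₀ (zpow_ne_zero r (hζ.ne_zero hN))]⟩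

lemma pow_mul_add_add_one_ne_one {G : Type*} [CommMonoid G] {Q : G} (hQ : IsPrimitiveRoot Q N)
    (l : ℕ) {i : ℕ} (hi : i + 1 < N) : Q ^ (l * N + i + 1) ≠ 1 := by
  rw [add_assoc, pow_add, pow_mul', hQ.pow_eq_one, one_pow, one_mul]
  exact hQ.pow_ne_one_of_pos_of_lt i.succ_ne_zero hi

-- Both numerator and denominator reduce to zero, but both have the form `1 - (q ^ N) ^ k`.
lemma exists_reducesTo_one_sub_div_one_sub [CharZero F] (hq : ReducesTo ψ q ζ)
    (hζ : IsPrimitiveRoot ζ N) (hN : N ≠ 0) (hqN : q ^ N ≠ 1) (hd : d ≠ 0) {m : ℕ}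
    (hm : ζ ^ r * (ζ ^ d) ^ m = 1) (l : ℕ) :
    ∃ y, ReducesTo ψ
      ((1 - q ^ r * (q ^ d) ^ (l * N + m)) / (1 - (q ^ d) ^ (l * N + N))) y := by
  have hζ0 : ζ ≠ 0 := hζ.ne_zero hN
  have hqN_red : ReducesTo ψ (q ^ N) 1 := hζ.pow_eq_one ▸ hq.pow N
  obtain ⟨k, hk⟩ : (N : ℤ) ∣ r + d * m := by
    rw [← hζ.zpow_eq_one_iff_dvd, zpow_add₀ hζ0, zpow_mul, zpow_natCast, zpow_natCast, hm]
  have num_eq : q ^ r * (q ^ d) ^ (l * N + m) = (q ^ N) ^ (k + d * l) := by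
    simp only [← zpow_natCast, ← zpow_mul, ← zpow_add₀ (hq.ne_zero hζ0)]
    congr 1
    push_cast
    linear_combination hk
  have den_eq : (q ^ d) ^ (l * N + N) = (q ^ N) ^ (d * (l + 1) : ℤ) := by
    simp only [← zpow_natCast, ← zpow_mul]
    congr 1
    push_cast
    ring
  rw [num_eq, den_eq]
  exact ⟨_, hqN_red.one_sub_zpow_div_one_sub_zpow hqN _
    (by exact_mod_cast mul_ne_zero hd l.succ_ne_zero)⟩

lemma exists_reducesTo_prod_wellPoisedFactor_one [CharZero F] (hq : ReducesTo ψ q ζ)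
    (hζ : IsPrimitiveRoot ζ N) (hN : N ≠ 0) (hqN : q ^ N ≠ 1) (hd : d ≠ 0) (hdN : d.Coprime N)
    (r : ℤ) (l : ℕ) :
    ∃ y, ReducesTo ψ (∏ i ∈ range N, wellPoisedFactor (q ^ r) (q ^ d) 1 (l * N + i)) y := by
  obtain ⟨m, hmN, hm⟩ := exists_zpow_mul_pow_eq_one hζ hN hdN r
  obtain ⟨y, hy⟩ := exists_reducesTo_one_sub_div_one_sub hq hζ hN hqN hd hm l
  obtain ⟨M, rfl⟩ := Nat.exists_eq_add_one_of_ne_zero hN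
  have isolate_zeros :
      ∏ i ∈ range (M + 1), wellPoisedFactor (q ^ r) (q ^ d) 1 (l * (M + 1) + i) =
        (∏ i ∈ (range (M + 1)).erase m, (1 - q ^ r * (q ^ d) ^ (l * (M + 1) + i))) /
          (∏ i ∈ range M, (1 - (q ^ d) ^ (l * (M + 1) + i + 1))) *
        ((1 - q ^ r * (q ^ d) ^ (l * (M + 1) + m)) / (1 - (q ^ d) ^ (l * (M + 1) + (M + 1)))) := by
    simp only [wellPoisedFactor, one_mul, inv_one, prod_div_distrib]
    rw [← prod_erase_mul _ _ (mem_range.2 hmN), prod_range_succ _ M, add_assoc _ M,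
      mul_div_mul_comm]
  have den_ne_zero : ∏ i ∈ range M, (1 - (ζ ^ d) ^ (l * (M + 1) + i + 1)) ≠ 0 :=
    prod_ne_zero_iff.2 fun i hi ↦ sub_ne_zero.2 (pow_mul_add_add_one_ne_one
      (hζ.pow_of_coprime d hdN) l (Nat.succ_lt_succ (mem_range.1 hi))).symm
  have hw_red : ReducesTo ψ (q ^ r) (ζ ^ r) := hq.zpow (hζ.ne_zero hN) r
  have hQ_red : ReducesTo ψ (q ^ d) (ζ ^ d) := hq.pow d
  rw [isolate_zeros]
  exact ⟨_, ReducesTo.mul (.div (.prod fun i _ ↦ .sub .one (hw_red.mul (hQ_red.pow _)))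
    (.prod fun i _ ↦ .sub .one (hQ_red.pow _)) den_ne_zero) hy⟩

variable {n c : ℕ} {ι : Type*} [Fintype ι] {x : ι → L} {y : ι → F} {z : L} {z' : F}

theorem ReducesTo.sum_wellPoised_zero_of_isPrimitiveRoot [CharZero F] (hq : ReducesTo ψ q ζ)
    (hζ : IsPrimitiveRoot ζ N) (hN : N ≠ 0) (hNn : N ∣ n) (hqN : q ^ N ≠ 1) (hd : d ≠ 0)
    (hdN : d.Coprime N) (r : ℤ) (hx : ∀ s, ReducesTo ψ (x s) (y s)) (hy0 : ∀ s, y s ≠ 0)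
    (hy_ne : ∀ s i, (y s)⁻¹ * (ζ ^ d) ^ i ≠ 1) (hcard : Fintype.card ι = 2 * c + 1)
    (hz : ReducesTo ψ z z') (hz' : z' * ((ζ ^ r) ^ (c + 1) * ∏ s, y s) = (ζ ^ d) ^ c) :
    ReducesTo ψ (∑ k ∈ range n, (1 - q ^ r * (q ^ d) ^ (2 * k)) *
      ∏ i ∈ range k, _root_.wellPoisedRatio (q ^ r) (q ^ d) z x i) 0 := by
  have hQ : IsPrimitiveRoot (ζ ^ d) N := hζ.pow_of_coprime d hdN
  have hQ_red : ReducesTo ψ (q ^ d) (ζ ^ d) := hq.pow d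
  have hw_red : ReducesTo ψ (q ^ r) (ζ ^ r) := hq.zpow (hζ.ne_zero hN) r
  obtain ⟨m, hmN, hm⟩ := exists_zpow_mul_pow_eq_one hζ hN hdN r
  refine sum_range_mul_prod_zero hNn (ε := fun j ↦ 1 - ζ ^ r * (ζ ^ d) ^ (2 * j))
    (σ := _root_.wellPoisedRatio (ζ ^ r) (ζ ^ d) z' y) ?_ ?_ ?_ ?_
  · intro l j _
    have periodic : (ζ ^ d) ^ (2 * (l * N + j)) = (ζ ^ d) ^ (2 * j) := by
      rw [mul_add, pow_add, ← mul_assoc, pow_mul' _ (2 * l), hQ.pow_eq_one, one_pow, one_mul]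
    rw [← periodic]
    exact one.sub (hw_red.mul (hQ_red.pow _))
  · intro l i hi
    rw [← wellPoisedRatio_mul_add hQ.pow_eq_one z' y l i]
    exact hw_red.wellPoisedRatio hQ_red hz hx hy0 (pow_mul_add_add_one_ne_one hQ l hi)
      fun s ↦ hy_ne s _
  · intro l
    obtain ⟨t, ht⟩ := exists_reducesTo_prod_wellPoisedFactor_one hq hζ hN hqN hd hdN r l
    simp only [_root_.wellPoisedRatio, prod_mul_distrib]
    exact ⟨_, mul (prod fun _ _ ↦ hz) (ht.mul (prod fun i _ ↦ prod fun s _ ↦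
      hw_red.wellPoisedFactor hQ_red (hx s) (hy0 s) (hy_ne s _)))⟩
  · exact sum_wellPoised_eq_zero (hQ.ne_zero hN) hm hy0 hcard hz'
      (fun i hi ↦ hQ.pow_ne_one_of_pos_of_lt i.succ_ne_zero (by omega))
      (fun s i _ ↦ hy_ne s _) hmN

theorem ReducesTo.sum_wellPoised_zero [CharZero F] (hq : ReducesTo ψ q ζ) (hn : n ≠ 0)
    (hd : d ≠ 0) (hnd : n.Coprime d) (r : ℤ) (hqn : q ^ n ≠ 1) (hζn : ζ ^ n = 1)
    (hx : ∀ s, ReducesTo ψ (x s) (y s)) (hy0 : ∀ s, y s ≠ 0) (hyn : ∀ s, y s ^ n ≠ 1)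
    (hcard : Fintype.card ι = 2 * c + 1)
    (hz : z * ((q ^ r) ^ (c + 1) * ∏ s, x s) = (q ^ d) ^ c) :
    ReducesTo ψ (∑ k ∈ range n, (1 - q ^ r * (q ^ d) ^ (2 * k)) *
      ∏ i ∈ range k, _root_.wellPoisedRatio (q ^ r) (q ^ d) z x i) 0 := by
  have hζ : IsPrimitiveRoot ζ (orderOf ζ) := .orderOf ζ
  have hNn : orderOf ζ ∣ n := orderOf_dvd_of_pow_eq_one hζn
  have hN : orderOf ζ ≠ 0 := ne_zero_of_dvd_ne_zero hn hNn
  have hqN : q ^ orderOf ζ ≠ 1 := fun h ↦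
    hqn (orderOf_dvd_iff_pow_eq_one.1 ((orderOf_dvd_of_pow_eq_one h).trans hNn))
  have hy_ne (s : ι) (i : ℕ) : (y s)⁻¹ * (ζ ^ d) ^ i ≠ 1 := fun h ↦ hyn s <| by
    rw [(inv_mul_eq_one₀ (hy0 s)).1 h, pow_right_comm (ζ ^ d), pow_right_comm ζ,
      hζn, one_pow, one_pow]
  have hζ0 : ζ ≠ 0 := hζ.ne_zero hN
  have hv0 : (ζ ^ r) ^ (c + 1) * ∏ s, y s ≠ 0 :=
    mul_ne_zero (pow_ne_zero _ (zpow_ne_zero r hζ0)) (prod_ne_zero_iff.2 fun s _ ↦ hy0 s)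
  have hv_red : ReducesTo ψ ((q ^ r) ^ (c + 1) * ∏ s, x s) ((ζ ^ r) ^ (c + 1) * ∏ s, y s) :=
    ((hq.zpow hζ0 r).pow (c + 1)).mul (prod fun s _ ↦ hx s)
  have hz_red : ReducesTo ψ z ((ζ ^ d) ^ c / ((ζ ^ r) ^ (c + 1) * ∏ s, y s)) :=
    eq_div_of_mul_eq (hv_red.ne_zero hv0) hz ▸ ((hq.pow d).pow c).div hv_red hv0
  exact hq.sum_wellPoised_zero_of_isPrimitiveRoot hζ hN hNn hqN hd
    (hnd.coprime_dvd_left hNn).symm r hx hy0 hy_ne hcard hz_red (div_mul_cancel₀ _ hv0)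

end WellPoisedReduction

section Squarefree

lemma dvd_of_squarefree_of_forall_prime_dvd {α : Type*} [CommMonoidWithZero α] [Nontrivial α]
    [UniqueFactorizationMonoid α] {a b : α} (ha : Squarefree a)
    (h : ∀ p, Prime p → p ∣ a → p ∣ b) : a ∣ b := by
  induction a using WfDvdMonoid.induction_on_irreducible with
  | zero => exact absurd ha not_squarefree_zero
  | unit u hu => exact hu.dvd
  | mul a p _ hp ih =>
    exact (IsRelPrime.of_squarefree_mul ha).mul_dvd (h p hp.prime (dvd_mul_right p a))
      (ih ha.of_mul_right fun p' hp' hpa ↦ h p' hp' (hpa.mul_left p))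

lemma squarefree_of_isCoprime_derivation {S A : Type*} [CommSemiring S] [CommRing A] [Algebra S A]
    (D : Derivation S A A) {f : A} (h : IsCoprime f (D f)) : Squarefree f := by
  rintro g ⟨t, rfl⟩
  have hD : g ∣ D (g * g * t) := by
    rw [D.leibniz, D.leibniz]
    simp only [smul_eq_mul]
    exact ⟨g * D t + t * (D g + D g), by ring⟩
  exact h.isUnit_of_dvd' ((dvd_mul_right g g).mul_right t) hD

open MvPolynomial in
lemma squarefree_X_pow_sub_one {σ k : Type*} [Field k] [CharZero k] (i : σ) {n : ℕ} (hn : n ≠ 0) :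
    Squarefree ((X i : MvPolynomial σ k) ^ n - 1) := by
  have pderiv_eq :
      pderiv i ((X i : MvPolynomial σ k) ^ n - 1) = C (n : k) * X i ^ (n - 1) := by
    simp [Derivation.leibniz_pow]
  have inv_mul : (C (n : k)⁻¹ * C (n : k) : MvPolynomial σ k) = 1 := by
    rw [← C_mul, inv_mul_cancel₀ (Nat.cast_ne_zero.2 hn), C_1]
  refine squarefree_of_isCoprime_derivation (pderiv i) ⟨-1, C (n : k)⁻¹ * X i, ?_⟩
  rw [pderiv_eq]
  linear_combination X i * X i ^ (n - 1) * inv_mul + mul_pow_sub_one hn (X i : MvPolynomial σ k)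

end Squarefree

section MvPolynomialDvd

open MvPolynomial

variable {σ k : Type*} [CommRing k] {p f : MvPolynomial σ k}

lemma vars_subset_of_dvd [NoZeroDivisors k] (h : p ∣ f) (hf : f ≠ 0) : p.vars ⊆ f.vars := by
  classical
  obtain ⟨g, rfl⟩ := h
  rw [vars_def, vars_def, degrees_mul_eq (left_ne_zero_of_mul hf) (right_ne_zero_of_mul hf),
    Multiset.toFinset_add]
  exact subset_union_left

lemma not_dvd_of_isUnit_aeval_update [DecidableEq σ] (hp : ¬IsUnit p) {j : σ} (hj : j ∉ p.vars)
    (v : MvPolynomial σ k) (hf : IsUnit (aeval (Function.update X j v) f)) : ¬p ∣ f := fun h ↦ by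
  have aeval_eq_self : aeval (Function.update X j v) p = p := by
    conv_rhs => rw [← aeval_X_left_apply p]
    refine eval₂Hom_congr' rfl (fun i hi _ ↦ ?_) rfl
    rw [Function.update_of_ne (ne_of_mem_of_not_mem hi hj)]
  exact hp (isUnit_of_dvd_unit (aeval_eq_self ▸ map_dvd (aeval (Function.update X j v)) h) hf)

end MvPolynomialDvd

section ResidueField

open MvPolynomial

variable {n : ℕ}

lemma X_zero_pow_sub_one (n : ℕ) : (X 0 : R) ^ n - 1 = qintR n * (X 0 - 1) :=
  (geom_sum_mul _ _).symm

lemma squarefree_qintR (hn : n ≠ 0) : Squarefree (qintR n) :=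
  (squarefree_X_pow_sub_one 0 hn).squarefree_of_dvd ⟨_, X_zero_pow_sub_one n⟩

lemma modCong_of_forall_reducesTo_zero {M : R} (hM : Squarefree M) {x : K}
    (h : ∀ (p : R) [(Ideal.span {p}).IsPrime], p ∣ M →
      ReducesTo (algebraMap R (Ideal.span {p}).ResidueField) x 0) : modCong M x := by
  obtain ⟨a, b, hab, hx⟩ := IsFractionRing.exists_reduced_fraction (A := R) x
  have hxb : x * algebraMap R K b = algebraMap R K a := by rw [← hx, IsLocalization.mk'_spec]
  have dvd_num (p : R) (hp : Prime p) (hpM : p ∣ M) : p ∣ a := by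
    have : (Ideal.span {p}).IsPrime := (Ideal.span_singleton_prime hp.ne_zero).2 hp
    obtain ⟨f, g, hg, hxg, hf⟩ := h p hpM
    rw [ne_eq, Ideal.algebraMap_residueField_eq_zero, Ideal.mem_span_singleton] at hg
    rw [zero_mul, eq_comm, Ideal.algebraMap_residueField_eq_zero, Ideal.mem_span_singleton] at hf
    have cross_mul : a * g = f * b := by
      apply IsFractionRing.injective R K
      rw [map_mul, map_mul, ← hxb, ← hxg, mul_right_comm]
    exact (hp.dvd_or_dvd (cross_mul ▸ hf.mul_right _)).resolve_right hg
  obtain ⟨f, hf⟩ := dvd_of_squarefree_of_forall_prime_dvd hM dvd_num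
  exact ⟨f, b, nonZeroDivisors.ne_zero b.2,
    fun p hp hpM hpb ↦ hp.not_isUnit (hab (dvd_num p hp hpM) hpb), by rw [hxb, hf]⟩

lemma X_zero_pow_sub_one_ne_zero (hn : n ≠ 0) : (X 0 : R) ^ n - 1 ≠ 0 := fun h ↦ by
  simpa [hn] using congrArg (eval 0) h

lemma qv_pow_ne_one (hn : n ≠ 0) : qv ^ n ≠ 1 := fun h ↦ X_zero_pow_sub_one_ne_zero hn <| by
  apply IsFractionRing.injective R K
  rw [map_sub, map_pow, map_one, map_zero]
  exact sub_eq_zero.2 h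

lemma notMem_vars_of_dvd_qintR (hn : n ≠ 0) {p : R} (hp : p ∣ qintR n) {j : Fin 4} (hj : j ≠ 0) :
    j ∉ p.vars := fun h ↦ by
  have hpX : p ∣ (X 0 : R) ^ n - 1 := hp.trans ⟨_, X_zero_pow_sub_one n⟩
  have := vars_sub_subset _ (vars_subset_of_dvd hpX (X_zero_pow_sub_one_ne_zero hn) h)
  rw [vars_one, union_empty] at this
  exact hj (mem_singleton.1 (vars_X (R := ℚ) (n := (0 : Fin 4)) ▸ vars_pow _ _ this))

lemma map_X_zero_pow_eq_one {F : Type*} [CommRing F] {ψ : R →+* F} (hψ : ψ (qintR n) = 0) :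
    ψ (X 0) ^ n = 1 := by
  rw [← sub_eq_zero, ← map_pow, ← map_one ψ, ← map_sub, X_zero_pow_sub_one, map_mul, hψ, zero_mul]

lemma map_X_zero_ne_one {F : Type*} [CommRing F] [CharZero F] {ψ : R →+* F} (hn : n ≠ 0)
    (hψ : ψ (qintR n) = 0) : ψ (X 0) ≠ 1 := fun h ↦ by
  simp [qintR, h, hn] at hψ

instance charZero_residueField {A : Type*} [CommRing A] [Algebra ℚ A] (I : Ideal A) [I.IsPrime] :
    CharZero I.ResidueField :=
  charZero_of_injective_algebraMap (algebraMap ℚ I.ResidueField).injective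

variable {p : R} [(Ideal.span {p}).IsPrime] {j : Fin 4}

lemma algebraMap_residueField_ne_zero_of_isUnit_aeval_update (hn : n ≠ 0) (hp : p ∣ qintR n)
    (hj : j ≠ 0) {f : R} (v : R) (hf : IsUnit (aeval (R := ℚ) (Function.update X j v) f)) :
    algebraMap R (Ideal.span {p}).ResidueField f ≠ 0 := by
  have not_isUnit : ¬IsUnit p := fun h ↦
    Ideal.IsPrime.ne_top ‹_› (Ideal.span_singleton_eq_top.2 h)
  rw [ne_eq, Ideal.algebraMap_residueField_eq_zero, Ideal.mem_span_singleton]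
  exact not_dvd_of_isUnit_aeval_update not_isUnit (notMem_vars_of_dvd_qintR hn hp hj) v hf

lemma algebraMap_residueField_X_ne_zero (hn : n ≠ 0) (hp : p ∣ qintR n) (hj : j ≠ 0) :
    algebraMap R (Ideal.span {p}).ResidueField (X j) ≠ 0 :=
  algebraMap_residueField_ne_zero_of_isUnit_aeval_update hn hp hj 1 (by simp)

lemma algebraMap_residueField_X_pow_ne_one (hn : n ≠ 0) (hp : p ∣ qintR n) (hj : j ≠ 0) :
    algebraMap R (Ideal.span {p}).ResidueField (X j) ^ n ≠ 1 := by
  rw [← sub_ne_zero, ← map_pow, ← map_one (algebraMap R _), ← map_sub]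
  exact algebraMap_residueField_ne_zero_of_isUnit_aeval_update hn hp hj 0 (by simp [hn])

end ResidueField

section Summand

lemma prod_range_wellPoisedFactor (w Q x : K) (k : ℕ) :
    ∏ i ∈ range k, wellPoisedFactor w Q x i = poch (x * w) Q k / poch (x⁻¹ * Q) Q k := by
  simp only [wellPoisedFactor, poch, prod_div_distrib, pow_succ', mul_assoc]

/-- The parameters which, together with `1`, present the summand of `stmt2` as a well-poised term
with `w = q ^ r` and base `Q = q ^ d`. -/
def wellPoisedParams {F : Type*} [Field F] (a b c : F) : Fin 5 → F := ![a, a⁻¹, b, b⁻¹, c⁻¹]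

lemma mul_poch_div_poch_mul_pow (e w Q a b c z : K) (k : ℕ) :
    e * (poch (a * w) Q k * poch (w / a) Q k * poch (b * w) Q k * poch (w / b) Q k *
        poch (w / c) Q k * poch w Q k) /
      (poch (a * Q) Q k * poch (Q / a) Q k * poch (b * Q) Q k * poch (Q / b) Q k *
        poch (c * Q) Q k * poch Q Q k) * z ^ k =
      e * ∏ i ∈ range k, wellPoisedRatio w Q z (wellPoisedParams a b c) i := by
  simp only [wellPoisedRatio, wellPoisedParams, Fin.prod_univ_five, Matrix.cons_val,
    prod_mul_distrib, prod_range_wellPoisedFactor, prod_const, card_range, inv_inv, inv_one,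
    one_mul, inv_mul_eq_div]
  ring

lemma algebraMap_X_ne_zero (j : Fin 4) : algebraMap R K (MvPolynomial.X j) ≠ 0 :=
  (map_ne_zero_iff _ (IsFractionRing.injective R K)).2 (MvPolynomial.X_ne_zero j)

lemma qint_two_mul_mul_add (d k : ℕ) (r : ℤ) :
    qint (2 * d * k + r) = (1 - qv ^ r * (qv ^ d) ^ (2 * k)) / (1 - qv) := by
  have hq : qv ≠ 0 := algebraMap_X_ne_zero 0
  rw [qint, zpow_add₀ hq, mul_comm, ← pow_mul, ← zpow_natCast, mul_left_comm, ← mul_assoc]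
  norm_cast

lemma mul_zpow_mul_prod_wellPoisedParams (d : ℕ) (r : ℤ) :
    cv * qv ^ (2 * d - 3 * r) * ((qv ^ r) ^ (2 + 1) * ∏ s, wellPoisedParams av bv cv s) =
      (qv ^ d) ^ 2 := by
  have hq : qv ≠ 0 := algebraMap_X_ne_zero 0
  have ha : av ≠ 0 := algebraMap_X_ne_zero 1
  have hb : bv ≠ 0 := algebraMap_X_ne_zero 2
  have hc : cv ≠ 0 := algebraMap_X_ne_zero 3
  have hpow : qv ^ (2 * d - 3 * r) * (qv ^ r) ^ 3 = (qv ^ d) ^ 2 := by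
    simp only [← zpow_natCast, ← zpow_mul, ← zpow_add₀ hq]
    congr 1
    push_cast
    ring
  rw [← hpow]
  simp only [wellPoisedParams, Fin.prod_univ_five, Matrix.cons_val]
  field_simp

variable {F : Type*} [Field F] {ψ : R →+* F}

lemma reducesTo_wellPoisedParams (hX : ∀ j ≠ 0, ψ (MvPolynomial.X j) ≠ 0) (s : Fin 5) :
    ReducesTo ψ (wellPoisedParams av bv cv s) (wellPoisedParams (ψ (MvPolynomial.X 1))
      (ψ (MvPolynomial.X 2)) (ψ (MvPolynomial.X 3)) s) := by
  have ha : ReducesTo ψ av (ψ (.X 1)) := .algebraMap _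
  have hb : ReducesTo ψ bv (ψ (.X 2)) := .algebraMap _
  have hc : ReducesTo ψ cv (ψ (.X 3)) := .algebraMap _
  fin_cases s
  exacts [ha, ha.inv (hX 1 (by decide)), hb, hb.inv (hX 2 (by decide)), hc.inv (hX 3 (by decide))]

lemma wellPoisedParams_ne_zero {a b c : F} (ha : a ≠ 0) (hb : b ≠ 0) (hc : c ≠ 0) (s : Fin 5) :
    wellPoisedParams a b c s ≠ 0 := by
  fin_cases s
  exacts [ha, inv_ne_zero ha, hb, inv_ne_zero hb, inv_ne_zero hc]

lemma wellPoisedParams_pow_ne_one {a b c : F} {n : ℕ} (ha : a ^ n ≠ 1) (hb : b ^ n ≠ 1)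
    (hc : c ^ n ≠ 1) (s : Fin 5) : wellPoisedParams a b c s ^ n ≠ 1 := by
  fin_cases s <;> simp [wellPoisedParams, ha, hb, hc]

theorem reducesTo_sum_qint_mul_prod_wellPoisedRatio_zero [CharZero F] {n d : ℕ} (hn : n ≠ 0)
    (hd : d ≠ 0) (hnd : n.Coprime d) (r : ℤ) (hψ : ψ (qintR n) = 0)
    (hX : ∀ j ≠ 0, ψ (MvPolynomial.X j) ≠ 0) (hXn : ∀ j ≠ 0, ψ (MvPolynomial.X j) ^ n ≠ 1) :
    ReducesTo ψ (∑ k ∈ range n, qint (2 * d * k + r) * ∏ i ∈ range k, wellPoisedRatio (qv ^ r)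
      (qv ^ d) (cv * qv ^ (2 * d - 3 * r)) (wellPoisedParams av bv cv) i) 0 := by
  have hq : ReducesTo ψ qv (ψ (.X 0)) := .algebraMap _
  simp only [qint_two_mul_mul_add, div_mul_eq_mul_div, ← sum_div]
  rw [← zero_div (1 - ψ (.X 0))]
  refine .div ?_ (ReducesTo.one.sub hq) (sub_ne_zero.2 (map_X_zero_ne_one hn hψ).symm)
  exact hq.sum_wellPoised_zero hn hd hnd r (qv_pow_ne_one hn) (map_X_zero_pow_eq_one hψ)
    (reducesTo_wellPoisedParams hX)
    (wellPoisedParams_ne_zero (hX 1 (by decide)) (hX 2 (by decide)) (hX 3 (by decide)))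
    (wellPoisedParams_pow_ne_one (hXn 1 (by decide)) (hXn 2 (by decide)) (hXn 3 (by decide)))
    (Fintype.card_fin 5) (mul_zpow_mul_prod_wellPoisedParams d r)

end Summand

theorem stmt2 (n d : ℕ) (hn : 0 < n) (hd : 0 < d) (hnd : Nat.gcd n d = 1) (r : ℤ) :
    modCong (qintR n)
      (∑ k ∈ Finset.range n,
        qint (2 * d * k + r) *
          (poch (av * qv ^ r) (qv ^ (d : ℤ)) k * poch (qv ^ r / av) (qv ^ (d : ℤ)) k *
            poch (bv * qv ^ r) (qv ^ (d : ℤ)) k * poch (qv ^ r / bv) (qv ^ (d : ℤ)) k *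
            poch (qv ^ r / cv) (qv ^ (d : ℤ)) k * poch (qv ^ r) (qv ^ (d : ℤ)) k) /
          (poch (av * qv ^ (d : ℤ)) (qv ^ (d : ℤ)) k * poch (qv ^ (d : ℤ) / av) (qv ^ (d : ℤ)) k *
            poch (bv * qv ^ (d : ℤ)) (qv ^ (d : ℤ)) k * poch (qv ^ (d : ℤ) / bv) (qv ^ (d : ℤ)) k *
            poch (cv * qv ^ (d : ℤ)) (qv ^ (d : ℤ)) k * poch (qv ^ (d : ℤ)) (qv ^ (d : ℤ)) k) *
          (cv * qv ^ (2 * d - 3 * r)) ^ k) := by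
  simp only [zpow_natCast, mul_poch_div_poch_mul_pow]
  refine modCong_of_forall_reducesTo_zero (squarefree_qintR hn.ne') fun p _ hp ↦ ?_
  have qintR_eq_zero : algebraMap R (Ideal.span {p}).ResidueField (qintR n) = 0 :=
    Ideal.algebraMap_residueField_eq_zero.2 (Ideal.mem_span_singleton.2 hp)
  exact reducesTo_sum_qint_mul_prod_wellPoisedRatio_zero hn.ne' hd.ne' hnd r qintR_eq_zero
    (fun _ ↦ algebraMap_residueField_X_ne_zero hn.ne' hp)
    (fun _ ↦ algebraMap_residueField_X_pow_ne_one hn.ne' hp)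

end
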